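/- Let C, C', C'' ∈ ℝ² with 0 < dist(C, C') ≤ 1 and 0 < dist(C, C'') ≤ 1, and suppose the undirected Euclidean angle ∠ C' C C'' is at least 2π/3. Let n ≥ 3 be an integer, let S ⊆ ℝ² be a finite set with at most n points, and set P = convexHull ℝ S. If P ⊆ closedBall(C, 1) and every point p ∈ P satisfies dist(p, C) ≤ dist(p, C') and dist(p, C) ≤ dist(p, C''), then volume(P) ≤ a*(n). -/

import Mathlib

/-!
Translate `C` to the origin. The points at least as close to `0` as to a neighbour `w` with
`‖w‖ ≤ 1` satisfy `⟪u, p⟫ ≤ 1 / 2` for `u = w / ‖w‖`, so the polygon lies in the unit disk cut by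
two chords at distance `1 / 2` from the centre, whose unit normals `u`, `v` have `⟪u, v⟫ ≤ -1 / 2`.

The truncated disk is the convex hull of its points on the unit circle. Since the area of
`convexHull (insert x s)` is a convex function of `x` (on each line in the direction in which `x`
moves, the slice lengths are convex), replacing the vertices one at a time puts all of them on the
circle without losing area.

The line through `u` and `v` splits the circle vertices into two clusters `A` and `B`, and any
`p ∈ A`, `q ∈ B` see each other at an angle of at least `2π / 3`. Let `a ∈ A` and `b ∈ B` be the
contact points of an inner common tangent of the two clusters. Reflecting `convexHull A` across
the perpendicular bisector of `a` and `b` keeps it on its side of the tangent, so no area is lost,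
and moves `A` next to `B`. Afterwards all vertices but `a` lie in the cap `⟪a, p⟫ ≤ -1 / 2`, and
rotating `a` to `(0, -1)` puts them in `M`.
-/

open Metric MeasureTheory Real

noncomputable section

/-- The Euclidean plane. -/
abbrev Pt := EuclideanSpace ℝ (Fin 2)

/-- The set `M`: the closed unit disk truncated by two chords of length `√3` sharing the
endpoint `(0, −1)`. -/
def M : Set Pt :=
  {p | p 0 ^ 2 + p 1 ^ 2 ≤ 1 ∧ Real.sqrt 3 * p 0 - p 1 ≤ 1 ∧ -Real.sqrt 3 * p 0 - p 1 ≤ 1}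

/-- `a*(n)`: the supremum of the areas of convex polygons with at most `n` vertices inscribed
in `M`. -/
def astar (n : ℕ) : ℝ :=
  sSup {a : ℝ | ∃ S : Finset Pt, (S : Set Pt) ⊆ M ∧ S.card ≤ n ∧
    a = (volume (convexHull ℝ (S : Set Pt))).toReal}

open Module
open scoped EuclideanSpace Pointwise RealInnerProductSpace

section ConvexHullMeasure

variable {E : Type*} [NormedAddCommGroup E] [NormedSpace ℝ E]

lemma volume_le_of_subset_combo {I₀ I₁ J : Set ℝ} (h₀ : Convex ℝ I₀) (h₁ : Convex ℝ I₁)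
    {a b : ℝ} (ha : 0 ≤ a) (hb : 0 ≤ b)
    (hJ : ∀ t ∈ J, ∃ t₀ ∈ I₀, ∃ t₁ ∈ I₁, t = a * t₀ + b * t₁) :
    volume J ≤ ENNReal.ofReal a * volume I₀ + ENNReal.ofReal b * volume I₁ := by
  have edist_le_volume {I : Set ℝ} (hI : Convex ℝ I) {t t' : ℝ} (ht : t ∈ I) (ht' : t' ∈ I) :
      ENNReal.ofReal (t' - t) ≤ volume I := by
    rw [← Real.volume_Icc]
    exact measure_mono (hI.ordConnected.out ht ht')
  refine (Real.volume_le_diam J).trans (ediam_le fun t ht t' ht' => ?_)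
  wlog htt' : t ≤ t' generalizing t t'
  · rw [edist_comm]
    exact this t' ht' t ht (le_of_not_ge htt')
  obtain ⟨t₀, ht₀, t₁, ht₁, rfl⟩ := hJ t ht
  obtain ⟨t₀', ht₀', t₁', ht₁', rfl⟩ := hJ t' ht'
  calc edist (a * t₀ + b * t₁) (a * t₀' + b * t₁')
      = ENNReal.ofReal (a * (t₀' - t₀) + b * (t₁' - t₁)) := by
        rw [edist_comm, edist_dist, Real.dist_eq, abs_of_nonneg (sub_nonneg.2 htt')]
        ring_nf
    _ ≤ ENNReal.ofReal (a * (t₀' - t₀)) + ENNReal.ofReal (b * (t₁' - t₁)) :=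
        ENNReal.ofReal_add_le
    _ ≤ ENNReal.ofReal a * volume I₀ + ENNReal.ofReal b * volume I₁ := by
        rw [ENNReal.ofReal_mul ha, ENNReal.ofReal_mul hb]
        gcongr
        exacts [edist_le_volume h₀ ht₀ ht₀', edist_le_volume h₁ ht₁ ht₁']

lemma exists_forall_add_smul_mem_convexHull_insert {s : Set E} {x z : E}
    (hz : z ∈ convexHull ℝ (insert x s)) :
    ∃ τ : ℝ, ∀ y, z + τ • (y - x) ∈ convexHull ℝ (insert y s) := by
  refine convexHull_min (t := {z | ∃ τ : ℝ, ∀ y, z + τ • (y - x) ∈ convexHull ℝ (insert y s)})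
    (Set.insert_subset ⟨1, fun y => ?_⟩ fun p hp => ⟨0, fun y => ?_⟩) ?_ hz
  · simpa using subset_convexHull ℝ _ (Set.mem_insert y s)
  · simpa using subset_convexHull ℝ _ (Set.mem_insert_of_mem y hp)
  · rintro p ⟨τ, hp⟩ q ⟨τ', hq⟩ a b ha hb hab
    refine ⟨a * τ + b * τ', fun y => ?_⟩
    convert convex_convexHull ℝ _ (hp y) (hq y) ha hb hab using 1
    module

variable [MeasurableSpace E] [BorelSpace E]

-- The slab `φ ⁻¹' [0, 1)` meets every line in the direction `v` in a segment of unit length, so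
-- integrating the slice lengths over the slab counts every point of `A` once.
lemma lintegral_volume_line [SecondCountableTopology E] (μ : Measure E) [SFinite μ]
    [μ.IsAddRightInvariant] {φ : E →L[ℝ] ℝ} {v : E} (hφ : φ v = 1) {A : Set E}
    (hA : MeasurableSet A) :
    ∫⁻ z in φ ⁻¹' Set.Ico 0 1, volume {t : ℝ | z + t • v ∈ A} ∂μ = μ A := by
  have hW : MeasurableSet (φ ⁻¹' Set.Ico 0 1) := φ.continuous.measurable measurableSet_Ico
  have hline : MeasurableSet {x : E × ℝ | x.1 + x.2 • v ∈ A} :=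
    measurableSet_preimage (f := fun x : E × ℝ => x.1 + x.2 • v) (by fun_prop) hA
  have hslab : MeasurableSet {x : E × ℝ | φ x.1 - x.2 ∈ Set.Ico 0 1} :=
    measurableSet_preimage (f := fun x : E × ℝ => φ x.1 - x.2) (by fun_prop) measurableSet_Ico
  calc ∫⁻ z in φ ⁻¹' Set.Ico 0 1, volume {t : ℝ | z + t • v ∈ A} ∂μ
      = (μ.restrict (φ ⁻¹' Set.Ico 0 1)).prod volume {x : E × ℝ | x.1 + x.2 • v ∈ A} :=
        (Measure.prod_apply hline).symm
    _ = ∫⁻ t : ℝ, μ.restrict (φ ⁻¹' Set.Ico 0 1) {z | z + t • v ∈ A} :=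
        Measure.prod_apply_symm hline
    _ = ∫⁻ t : ℝ, μ.restrict A {z | φ z - t ∈ Set.Ico 0 1} := by
        refine lintegral_congr fun t => ?_
        rw [Measure.restrict_apply' hW, Measure.restrict_apply' hA, ← measure_preimage_add_right μ
          (t • v) ({z | φ z - t ∈ Set.Ico 0 1} ∩ A)]
        congr 1
        ext z
        simp [hφ, and_comm]
    _ = (μ.restrict A).prod volume {x : E × ℝ | φ x.1 - x.2 ∈ Set.Ico 0 1} :=
        (Measure.prod_apply_symm hslab).symm
    _ = ∫⁻ z in A, volume {t : ℝ | φ z - t ∈ Set.Ico 0 1} ∂μ :=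
        Measure.prod_apply hslab
    _ = μ A := by
        have (z : E) : {t : ℝ | φ z - t ∈ Set.Ico 0 1} = Set.Ioc (φ z - 1) (φ z) := by
          ext t
          simp [and_comm, sub_lt_comm]
        simp only [this, Real.volume_Ioc, sub_sub_cancel, ENNReal.ofReal_one, lintegral_one,
          Measure.restrict_apply_univ]

variable [FiniteDimensional ℝ E] (μ : Measure E) [IsFiniteMeasureOnCompacts μ]
  [μ.IsAddRightInvariant]

theorem convexOn_measureReal_convexHull_insert {s : Set E} (hs : s.Finite) :
    ConvexOn ℝ Set.univ fun x => μ.real (convexHull ℝ (insert x s)) := by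
  refine ⟨convex_univ, fun x₀ _ x₁ _ a b ha hb hab => ?_⟩
  obtain rfl | hne := eq_or_ne x₀ x₁
  · simp only [← add_smul, hab, one_smul, le_refl]
  obtain ⟨φ, hφ⟩ := SeparatingDual.exists_eq_one (R := ℝ) (sub_ne_zero.2 hne.symm)
  let K (x : E) : Set E := convexHull ℝ (insert x s)
  let len (x z : E) : ENNReal := volume {t : ℝ | z + t • (x₁ - x₀) ∈ K x}
  have hK (x : E) : IsCompact (K x) := (hs.insert x).isCompact_convexHull ℝ
  have hfubini (x : E) : ∫⁻ z in φ ⁻¹' Set.Ico 0 1, len x z ∂μ = μ (K x) :=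
    lintegral_volume_line μ hφ (hK x).measurableSet
  have hmeas (x : E) : Measurable (len x) :=
    measurable_measure_prodMk_left (measurableSet_preimage
      (f := fun p : E × ℝ => p.1 + p.2 • (x₁ - x₀)) (by fun_prop) (hK x).measurableSet)
  have hconvex (x z : E) : Convex ℝ {t : ℝ | z + t • (x₁ - x₀) ∈ K x} := by
    intro t ht t' ht' α β hα hβ hαβ
    obtain rfl : α = 1 - β := by linarith
    change z + _ • (x₁ - x₀) ∈ K x
    convert convex_convexHull ℝ _ ht ht' hα hβ hαβ using 1
    module
  have hlen (z : E) : len (a • x₀ + b • x₁) z ≤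
      ENNReal.ofReal a * len x₀ z + ENNReal.ofReal b * len x₁ z := by
    refine volume_le_of_subset_combo (hconvex x₀ z) (hconvex x₁ z) ha hb fun t ht => ?_
    obtain ⟨τ, hτ⟩ := exists_forall_add_smul_mem_convexHull_insert ht
    obtain rfl : a = 1 - b := by linarith
    refine ⟨t - τ * b, ?_, t + τ * (1 - b), ?_, by ring⟩
    · change z + _ • (x₁ - x₀) ∈ K x₀
      convert hτ x₀ using 1
      module
    · change z + _ • (x₁ - x₀) ∈ K x₁
      convert hτ x₁ using 1
      module
  have hμ : μ (K (a • x₀ + b • x₁)) ≤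
      ENNReal.ofReal a * μ (K x₀) + ENNReal.ofReal b * μ (K x₁) := by
    simp only [← hfubini]
    grw [hlen]
    rw [lintegral_add_left ((hmeas x₀).const_mul _), lintegral_const_mul _ (hmeas x₀),
      lintegral_const_mul _ (hmeas x₁)]
  have hfin (x : E) : μ (K x) ≠ ⊤ := (hK x).measure_lt_top.ne
  refine (ENNReal.toReal_mono (by finiteness [hfin x₀, hfin x₁]) hμ).trans_eq ?_
  rw [ENNReal.toReal_add (by finiteness [hfin x₀]) (by finiteness [hfin x₁])]
  simp [Measure.real, K, ha, hb]

lemma exists_finset_subset_measure_convexHull_union_le {s : Set E} (A B : Finset E)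
    (hA : (A : Set E) ⊆ convexHull ℝ s) (hB : (B : Set E) ⊆ s) :
    ∃ T : Finset E, (T : Set E) ⊆ s ∧ T.card ≤ A.card + B.card ∧
      μ (convexHull ℝ (A ∪ B : Set E)) ≤ μ (convexHull ℝ (T : Set E)) := by
  classical
  induction A using Finset.induction_on generalizing B with
  | empty => exact ⟨B, hB, by simp, by simp⟩
  | insert x A hxA ih =>
    rw [Finset.coe_insert, Set.insert_subset_iff] at hA
    have hfin : (A ∪ B : Set E).Finite := A.finite_toSet.union B.finite_toSet
    have hconvex := convexOn_measureReal_convexHull_insert μ hfin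
    obtain ⟨y, hy, hxy⟩ := hconvex.exists_ge_of_mem_convexHull (Set.subset_univ s) hA.1
    obtain ⟨T, hT, hTcard, hTμ⟩ := ih (insert y B) hA.2 (by simp [Set.insert_subset_iff, hy, hB])
    refine ⟨T, hT, ?_, ?_⟩
    · grw [hTcard, Finset.card_insert_le, Finset.card_insert_of_notMem hxA]
      omega
    · refine le_trans ?_ hTμ
      rw [Finset.coe_insert, Finset.coe_insert, Set.insert_union, Set.union_insert]
      have hfin' (x : E) := ((hfin.insert x).isCompact_convexHull ℝ).measure_lt_top (μ := μ) |>.ne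
      exact (ENNReal.toReal_le_toReal (hfin' x) (hfin' y)).1 hxy

theorem exists_finset_subset_measure_convexHull_le {s : Set E} (S : Finset E)
    (hS : (S : Set E) ⊆ convexHull ℝ s) :
    ∃ T : Finset E, (T : Set E) ⊆ s ∧ T.card ≤ S.card ∧
      μ (convexHull ℝ (S : Set E)) ≤ μ (convexHull ℝ (T : Set E)) := by
  simpa using exists_finset_subset_measure_convexHull_union_le μ S ∅ hS (by simp)

end ConvexHullMeasure

section SphericalHull

variable {E : Type*} [NormedAddCommGroup E] [NormedSpace ℝ E]

lemma exists_mem_segment_dist_eq {c p q : E} {r : ℝ} (hp : dist p c ≤ r) (hq : r ≤ dist q c) :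
    ∃ x ∈ segment ℝ q p, dist x c = r := by
  obtain ⟨x, hx, hxr⟩ := (convex_segment q p).isPreconnected.intermediate_value
    (right_mem_segment ℝ q p) (left_mem_segment ℝ q p)
    (f := (dist · c)) (by fun_prop) ⟨hp, hq⟩
  exact ⟨x, hx, hxr⟩

lemma mem_convexHull_sphere_inter {H : Set E} (hH : Convex ℝ H) {c p q₁ q₂ : E} {r : ℝ}
    (hq₁ : q₁ ∈ H) (hq₂ : q₂ ∈ H) (hp : p ∈ segment ℝ q₁ q₂) (hpc : dist p c ≤ r)
    (hq₁c : r ≤ dist q₁ c) (hq₂c : r ≤ dist q₂ c) :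
    p ∈ convexHull ℝ (sphere c r ∩ H) := by
  have hpH : p ∈ H := hH.segment_subset hq₁ hq₂ hp
  obtain ⟨x₁, hx₁, hx₁c⟩ := exists_mem_segment_dist_eq hpc hq₁c
  obtain ⟨x₂, hx₂, hx₂c⟩ := exists_mem_segment_dist_eq hpc hq₂c
  rw [mem_segment_iff_wbtw] at hp
  have hx₁p : Wbtw ℝ x₁ p q₂ := hp.trans_left_right (mem_segment_iff_wbtw.1 hx₁)
  have hx₁x₂ : Wbtw ℝ x₁ p x₂ :=
    (hx₁p.symm.trans_left_right (mem_segment_iff_wbtw.1 hx₂)).symm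
  have hx₁S : x₁ ∈ sphere c r ∩ H := ⟨hx₁c, hH.segment_subset hq₁ hpH hx₁⟩
  have hx₂S : x₂ ∈ sphere c r ∩ H := ⟨hx₂c, hH.segment_subset hq₂ hpH hx₂⟩
  exact segment_subset_convexHull hx₁S hx₂S hx₁x₂.mem_segment

end SphericalHull

section Wedge

variable {V : Type*} [NormedAddCommGroup V] [InnerProductSpace ℝ V] {u v : V}

/-- For unit vectors `u` and `v`, the Voronoi region of the origin with respect to `0`, `u`, `v`:
the half-space of points at least as close to `0` as to `u` is `⟪u, p⟫ ≤ 1 / 2`. -/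
def voronoiWedge (u v : V) : Set V := {p | ⟪u, p⟫ ≤ 1 / 2 ∧ ⟪v, p⟫ ≤ 1 / 2}

lemma convex_voronoiWedge (u v : V) : Convex ℝ (voronoiWedge u v) :=
  (convex_halfSpace_le (innerₛₗ ℝ u).isLinear _).inter
    (convex_halfSpace_le (innerₛₗ ℝ v).isLinear _)

-- The lines `p + ℝ (e + 2 k p)` pass through the common point of the two bounding lines, so that
-- both constraints are multiplied by the same factor `1 + 2 k t` along them.
lemma add_smul_mem_voronoiWedge {e : V} {k : ℝ} (hu : ⟪u, e⟫ = -k) (hv : ⟪v, e⟫ = -k) {p : V}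
    (hp : p ∈ voronoiWedge u v) {t : ℝ} (ht : 0 ≤ 1 + 2 * k * t) :
    p + t • (e + (2 * k) • p) ∈ voronoiWedge u v := by
  constructor <;> simp only [inner_add_right, inner_smul_right, hu, hv]
  · nlinarith [mul_le_mul_of_nonneg_left hp.1 ht]
  · nlinarith [mul_le_mul_of_nonneg_left hp.2 ht]

theorem closedBall_inter_voronoiWedge_subset_convexHull {e : V} (he : ‖e‖ = 1) {k : ℝ} (hk : 0 ≤ k)
    (hk' : k ≤ 1 / 2) (hu : ⟪u, e⟫ = -k) (hv : ⟪v, e⟫ = -k) :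
    closedBall 0 1 ∩ voronoiWedge u v ⊆ convexHull ℝ (sphere 0 1 ∩ voronoiWedge u v) := by
  rintro p ⟨hp, hpW⟩
  rw [mem_closedBall_zero_iff] at hp
  obtain hp1 | hp1 := hp.eq_or_lt
  · exact subset_convexHull ℝ _ ⟨by simpa using hp1, hpW⟩
  set r := ‖p‖ with hr
  have hr0 : 0 ≤ r := norm_nonneg p
  have hkr : 2 * k * r < 1 := by nlinarith
  have norm_ge {t : ℝ} (ht : 0 ≤ 1 + 2 * k * t) (ht' : 1 + (1 + 2 * k * t) * r ≤ |t|) :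
      1 ≤ dist (p + t • (e + (2 * k) • p)) 0 := by
    have htri := norm_sub_norm_le (t • e) (-((1 + 2 * k * t) • p))
    rw [norm_neg, norm_smul, norm_smul, he, mul_one, Real.norm_eq_abs, Real.norm_eq_abs,
      abs_of_nonneg ht, ← hr] at htri
    rw [dist_zero_right, show p + t • (e + (2 * k) • p) = t • e - -((1 + 2 * k * t) • p) by module]
    linarith
  have hd₁ : 0 < 1 + 2 * k * r := by positivity
  have hd₂ : 0 < 1 - 2 * k * r := by linarith
  obtain ⟨t₁, ht₁⟩ : ∃ t₁, t₁ = (1 + r) / (1 + 2 * k * r) := ⟨_, rfl⟩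
  obtain ⟨t₂, ht₂⟩ : ∃ t₂, t₂ = (1 + r) / (1 - 2 * k * r) := ⟨_, rfl⟩
  have ht₁0 : 0 < t₁ := by rw [ht₁]; positivity
  have ht₂0 : 0 < t₂ := by rw [ht₂]; positivity
  rw [eq_div_iff hd₁.ne'] at ht₁
  rw [eq_div_iff hd₂.ne'] at ht₂
  have hfac₁ : 0 ≤ 1 + 2 * k * -t₁ := by nlinarith
  have hfac₂ : 0 ≤ 1 + 2 * k * t₂ := by positivity
  refine mem_convexHull_sphere_inter (convex_voronoiWedge u v)
    (add_smul_mem_voronoiWedge hu hv hpW hfac₁) (add_smul_mem_voronoiWedge hu hv hpW hfac₂)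
    ?_ (by simpa using hp)
    (norm_ge hfac₁ (by rw [abs_neg, abs_of_pos ht₁0]; linarith))
    (norm_ge hfac₂ (by rw [abs_of_pos ht₂0]; linarith))
  refine ⟨t₂ / (t₁ + t₂), t₁ / (t₁ + t₂), by positivity, by positivity, by field_simp; ring, ?_⟩
  match_scalars <;> field_simp <;> ring

end Wedge

section Plane

variable {V : Type*} [NormedAddCommGroup V] [InnerProductSpace ℝ V] [Fact (finrank ℝ V = 2)]

lemma collinear_of_forall_inner_eq {n : V} (hn : n ≠ 0) {c : ℝ} {s : Set V}
    (hs : ∀ x ∈ s, ⟪n, x⟫ = c) : Collinear ℝ s := by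
  have : FiniteDimensional ℝ V := .of_fact_finrank_eq_two
  rw [collinear_iff_finrank_le_one,
    ← Submodule.finrank_orthogonal_span_singleton (𝕜 := ℝ) (n := 1) hn]
  refine Submodule.finrank_mono (Submodule.span_le.2 ?_)
  rintro _ ⟨x, hx, y, hy, rfl⟩
  simp [Submodule.mem_orthogonal_singleton_iff_inner_right, inner_sub_right, hs x hx, hs y hy]

lemma mem_segment_of_inner_eq {n : V} (hn : n ≠ 0) {a b z : V} (ha : ‖a‖ = 1) (hb : ‖b‖ = 1)
    (hab : a ≠ b) (hz : ‖z‖ ≤ 1) (hbn : ⟪n, b⟫ = ⟪n, a⟫) (hzn : ⟪n, z⟫ = ⟪n, a⟫) :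
    z ∈ segment ℝ a b := by
  have hcol : Collinear ℝ {a, z, b} :=
    collinear_of_forall_inner_eq hn (c := ⟪n, a⟫) (by simp [hbn, hzn])
  rw [mem_segment_iff_wbtw]
  exact hcol.wbtw_of_dist_eq_of_dist_le (p := 0) (r := 1) (by simpa) (by simpa) (by simpa) hab

lemma one_sub_inner_sq_eq {p q w : V} (hp : ‖p‖ = 1) (hq : ‖q‖ = 1) (hw : ‖w‖ = 1) :
    1 - ⟪p, q⟫ ^ 2 = ⟪w, p⟫ ^ 2 + ⟪w, q⟫ ^ 2 - 2 * ⟪p, q⟫ * (⟪w, p⟫ * ⟪w, q⟫) := by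
  have : FiniteDimensional ℝ V := .of_fact_finrank_eq_two
  have hdet : (Matrix.gram ℝ ![p, q, w]).det = 0 := by
    by_contra h
    have := (Matrix.linearIndependent_of_det_gram_ne_zero h).fintype_card_le_finrank
    simp [Fact.out (p := finrank ℝ V = 2)] at this
  simp only [Matrix.det_fin_three, Matrix.gram_apply, Matrix.cons_val, real_inner_self_eq_norm_sq,
    hp, hq, hw, real_inner_comm w p, real_inner_comm w q, real_inner_comm p q] at hdet
  linear_combination hdet

lemma inner_le_neg_half_of_one_add_inner_le {p q w : V} (hp : ‖p‖ = 1) (hq : ‖q‖ = 1)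
    (hw : ‖w‖ = 1) (hwp : ⟪w, p⟫ ≤ 1 / 2) (hwq : ⟪w, q⟫ ≤ 1 / 2)
    (h : 1 + ⟪p, q⟫ ≤ ⟪w, p⟫ + ⟪w, q⟫) : ⟪p, q⟫ ≤ -(1 / 2) := by
  have hgram := one_sub_inner_sq_eq hp hq hw
  by_contra! hd
  have hwp0 : 0 ≤ ⟪w, p⟫ := by linarith
  have hwq0 : 0 ≤ ⟪w, q⟫ := by linarith
  have hwp2 : ⟪w, p⟫ ^ 2 ≤ 1 / 4 := by nlinarith [hwp0]
  have hwq2 : ⟪w, q⟫ ^ 2 ≤ 1 / 4 := by nlinarith [hwq0]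
  have hwpq : ⟪w, p⟫ * ⟪w, q⟫ ≤ 1 / 4 := by nlinarith [hwp0, hwq0]
  nlinarith [hwp2, hwq2, hwpq]

lemma inner_le_neg_half_of_mem_voronoiWedge {u v e : V} {k : ℝ} (hu : ‖u‖ = 1) (hv : ‖v‖ = 1)
    (he : e ≠ 0) (huv : u ≠ v) (hue : ⟪e, u⟫ = -k) (hve : ⟪e, v⟫ = -k) {p q : V} (hp : ‖p‖ = 1)
    (hpW : p ∈ voronoiWedge u v) (hq : ‖q‖ = 1) (hqW : q ∈ voronoiWedge u v)
    (hpe : ⟪e, p⟫ ≤ -k) (hqe : -k ≤ ⟪e, q⟫) : ⟪p, q⟫ ≤ -(1 / 2) := by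
  obtain ⟨z, hz, hze⟩ : ∃ z ∈ segment ℝ p q, ⟪e, z⟫ = -k :=
    (convex_segment p q).isPreconnected.intermediate_value (left_mem_segment ℝ p q)
      (right_mem_segment ℝ p q) (by fun_prop) ⟨hpe, hqe⟩
  have hz1 : ‖z‖ ≤ 1 := by
    have := (convex_closedBall (0 : V) 1).segment_subset (by simp [hp]) (by simp [hq]) hz
    simpa using this
  have hzuv : z ∈ segment ℝ u v :=
    mem_segment_of_inner_eq he hu hv huv hz1 (hve.trans hue.symm) (hze.trans hue.symm)
  have hzpq : ⟪p + q, z⟫ = 1 + ⟪p, q⟫ := by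
    obtain ⟨α, β, -, -, hαβ, rfl⟩ := hz
    simp only [inner_add_left, inner_add_right, inner_smul_right, real_inner_self_eq_norm_sq,
      hp, hq, real_inner_comm p q]
    linear_combination (1 + ⟪p, q⟫) * hαβ
  have hconv : ConvexOn ℝ Set.univ (⟪p + q, ·⟫) := (innerₛₗ ℝ (p + q)).convexOn convex_univ
  have hmax := hconv.le_max_of_mem_segment (Set.mem_univ u) (Set.mem_univ v) hzuv
  rw [hzpq, inner_add_left, inner_add_left] at hmax
  rcases le_max_iff.1 hmax with h | h
  · refine inner_le_neg_half_of_one_add_inner_le hp hq hu hpW.1 hqW.1 ?_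
    rwa [real_inner_comm p u, real_inner_comm q u]
  · refine inner_le_neg_half_of_one_add_inner_le hp hq hv hpW.2 hqW.2 ?_
    rwa [real_inner_comm p v, real_inner_comm q v]

lemma exists_norm_eq_one_inner_eq_zero (w : V) : ∃ e : V, ‖e‖ = 1 ∧ ⟪w, e⟫ = 0 := by
  have : FiniteDimensional ℝ V := .of_fact_finrank_eq_two
  have hpos : 0 < finrank ℝ (ℝ ∙ w)ᗮ := by
    have h := (ℝ ∙ w).finrank_add_finrank_orthogonal
    have h₁ := finrank_span_le_card (R := ℝ) ({w} : Set V)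
    rw [Fact.out (p := finrank ℝ V = 2)] at h
    simp only [Set.toFinset_singleton, Finset.card_singleton] at h₁
    omega
  have := nontrivial_of_finrank_pos hpos
  obtain ⟨⟨e, hew⟩, he⟩ := exists_norm_eq (ℝ ∙ w)ᗮ zero_le_one
  exact ⟨e, he, Submodule.mem_orthogonal_singleton_iff_inner_right.1 hew⟩

lemma exists_norm_eq_one_inner_eq_neg {u v : V} (hu : ‖u‖ = 1) (hv : ‖v‖ = 1)
    (huv : ⟪u, v⟫ ≤ -(1 / 2)) :
    ∃ e : V, ‖e‖ = 1 ∧ ∃ k, 0 ≤ k ∧ k ≤ 1 / 2 ∧ ⟪e, u⟫ = -k ∧ ⟪e, v⟫ = -k := by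
  obtain ⟨e, he, hperp⟩ := exists_norm_eq_one_inner_eq_zero (u - v)
  wlog hue : ⟪e, u⟫ ≤ 0 generalizing e
  · refine this (-e) (by simpa) (by simpa) ?_
    rw [inner_neg_left]
    linarith
  have hve : ⟪e, v⟫ = ⟪e, u⟫ := by
    rw [real_inner_comm, inner_sub_right, sub_eq_zero] at hperp
    exact hperp.symm
  have hnorm : ‖u + v‖ ≤ 1 := by
    rw [← sq_le_one_iff₀ (norm_nonneg _), norm_add_sq_real, hu, hv]
    linarith
  have hbound := neg_le_of_abs_le (abs_real_inner_le_norm e (u + v))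
  rw [he, inner_add_right, hve] at hbound
  exact ⟨e, he, -⟪e, u⟫, by linarith, by linarith, by ring, by linarith⟩

end Plane

section Reflection

variable {V : Type*} [NormedAddCommGroup V] [InnerProductSpace ℝ V]

lemma exists_inner_common_tangent {A B : Finset V} (hA : A.Nonempty) (hB : B.Nonempty) {e : V}
    (f : V) (hAB : ∀ p ∈ A, ∀ q ∈ B, ⟪e, p⟫ < ⟪e, q⟫) :
    ∃ c : ℝ, ∃ a ∈ A, ∃ b ∈ B, ⟪c • e - f, b⟫ = ⟪c • e - f, a⟫ ∧
      (∀ p ∈ A, ⟪c • e - f, p⟫ ≤ ⟪c • e - f, a⟫) ∧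
      ∀ q ∈ B, ⟪c • e - f, a⟫ ≤ ⟪c • e - f, q⟫ := by
  obtain ⟨⟨a, b⟩, hab, hmax⟩ := (A ×ˢ B).exists_max_image
    (fun x => (⟪f, x.2⟫ - ⟪f, x.1⟫) / (⟪e, x.2⟫ - ⟪e, x.1⟫)) (hA.product hB)
  obtain ⟨ha, hb⟩ := Finset.mem_product.1 hab
  obtain ⟨c, hc⟩ : ∃ c, c = (⟪f, b⟫ - ⟪f, a⟫) / (⟪e, b⟫ - ⟪e, a⟫) := ⟨_, rfl⟩
  have hslope : ∀ p ∈ A, ∀ q ∈ B, ⟪f, q⟫ - ⟪f, p⟫ ≤ c * (⟪e, q⟫ - ⟪e, p⟫) := fun p hp q hq => by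
    rw [← div_le_iff₀ (sub_pos.2 (hAB p hp q hq)), hc]
    exact hmax (p, q) (Finset.mk_mem_product hp hq)
  have htan : ⟪f, b⟫ - ⟪f, a⟫ = c * (⟪e, b⟫ - ⟪e, a⟫) := by
    rw [hc, div_mul_cancel₀ _ (sub_pos.2 (hAB a ha b hb)).ne']
  simp only [inner_sub_left, real_inner_smul_left]
  exact ⟨c, a, ha, b, hb, by linarith, fun p hp => by linarith [hslope p hp b hb],
    fun q hq => by linarith [hslope a ha q hq]⟩

lemma convexHull_union_inter_halfSpace_subset {A B : Set V} {a b n : V} {c : ℝ} (ha : a ∈ A)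
    (hb : b ∈ B) (hB : ∀ q ∈ B, c ≤ ⟪n, q⟫)
    (hcut : ∀ z ∈ convexHull ℝ (A ∪ B), ⟪n, z⟫ = c → z ∈ segment ℝ a b) :
    convexHull ℝ (A ∪ B) ∩ {z | ⟪n, z⟫ ≤ c} ⊆
      convexHull ℝ (insert b A) := by
  rintro z ⟨hz, hzn⟩
  obtain ⟨x, hx, y, hy, hxy⟩ : ∃ x ∈ convexHull ℝ A, ∃ y ∈ convexHull ℝ B, z ∈ segment ℝ x y := by
    rwa [convexHull_union ⟨a, ha⟩ ⟨b, hb⟩, mem_convexJoin] at hz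
  have hyn : c ≤ ⟪n, y⟫ :=
    convexHull_min hB (convex_halfSpace_ge (innerₛₗ ℝ n).isLinear c) hy
  obtain ⟨w, hw, hwn⟩ : ∃ w ∈ segment ℝ z y, ⟪n, w⟫ = c :=
    (convex_segment z y).isPreconnected.intermediate_value (left_mem_segment ℝ z y)
      (right_mem_segment ℝ z y) (by fun_prop) ⟨hzn, hyn⟩
  have hwhull : w ∈ convexHull ℝ (A ∪ B) := (convex_convexHull ℝ _).segment_subset hz
    (convexHull_mono Set.subset_union_right hy) hw
  have hwA : w ∈ convexHull ℝ (insert b A) :=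
    segment_subset_convexHull (Set.mem_insert_of_mem b ha) (Set.mem_insert b A) (hcut w hwhull hwn)
  have hzxw : Wbtw ℝ x z w :=
    (Wbtw.trans_left_right (mem_segment_iff_wbtw.1 hxy).symm
      (mem_segment_iff_wbtw.1 hw).symm).symm
  exact (convex_convexHull ℝ _).segment_subset (convexHull_mono (Set.subset_insert b A) hx) hwA
    hzxw.mem_segment

lemma exists_linearIsometryEquiv_swap {a b : V} (hab : ‖a‖ = ‖b‖) :
    ∃ σ : V ≃ₗᵢ[ℝ] V, σ a = b ∧ σ b = a ∧ ∀ n, ⟪n, b⟫ = ⟪n, a⟫ → ∀ x, ⟪n, σ x⟫ = ⟪n, x⟫ := by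
  have hswap : (ℝ ∙ (a - b))ᗮ.reflection a = b := Submodule.reflection_sub hab
  refine ⟨(ℝ ∙ (a - b))ᗮ.reflection, hswap, ?_, fun n hn x => ?_⟩
  · have hinv := Submodule.reflection_reflection (ℝ ∙ (a - b))ᗮ a
    rwa [hswap] at hinv
  · have hnσ : (ℝ ∙ (a - b))ᗮ.reflection n = n := by
      rw [Submodule.reflection_eq_self_iff, Submodule.mem_orthogonal_singleton_iff_inner_left,
        inner_sub_right, hn, sub_self]
    nth_rw 1 [← hnσ]
    exact LinearIsometryEquiv.inner_map_map _ _ _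

/-- The points of the unit sphere that equal `a` or lie in the cap `⟪a, p⟫ ≤ r`. The vertices of the
optimal polygons lie, up to an isometry, in `pointedCap !₂[0, -1] (-(1 / 2))`, the part of the unit
circle in `M`. -/
def pointedCap (a : V) (r : ℝ) : Set V := {p | ‖p‖ = 1 ∧ (p = a ∨ ⟪a, p⟫ ≤ r)}

lemma map_mem_pointedCap (σ : V ≃ₗᵢ[ℝ] V) {a p : V} {r : ℝ} (hp : p ∈ pointedCap a r) :
    σ p ∈ pointedCap (σ a) r := by
  simpa [pointedCap] using hp

lemma image_convexHull_linearIsometryEquiv (σ : V ≃ₗᵢ[ℝ] V) (s : Set V) :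
    σ '' convexHull ℝ s = convexHull ℝ (σ '' s) :=
  LinearMap.image_convexHull σ.toLinearEquiv.toLinearMap s

variable [MeasurableSpace V] [BorelSpace V] [FiniteDimensional ℝ V]

lemma volume_preimage_linearIsometryEquiv (σ : V ≃ₗᵢ[ℝ] V) (s : Set V) :
    volume (σ ⁻¹' s) = volume s :=
  σ.measurePreserving.measure_preimage_emb σ.toHomeomorph.measurableEmbedding s

lemma volume_convexHull_image_linearIsometryEquiv (σ : V ≃ₗᵢ[ℝ] V) (s : Set V) :
    volume (convexHull ℝ (σ '' s)) = volume (convexHull ℝ s) := by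
  rw [← volume_preimage_linearIsometryEquiv σ, ← image_convexHull_linearIsometryEquiv,
    Set.preimage_image_eq _ σ.injective]

lemma volume_convexHull_union_le_of_swap {A B : Set V} {a b n : V} {c : ℝ} (ha : a ∈ A)
    (hb : b ∈ B) (hA : ∀ p ∈ A, ⟪n, p⟫ ≤ c) (hB : ∀ q ∈ B, c ≤ ⟪n, q⟫)
    (hcut : ∀ z ∈ convexHull ℝ (A ∪ B), ⟪n, z⟫ = c → z ∈ segment ℝ a b)
    {σ : V ≃ₗᵢ[ℝ] V} (hσb : σ b = a) (hσn : ∀ x, ⟪n, σ x⟫ = ⟪n, x⟫) :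
    volume (convexHull ℝ (A ∪ B)) ≤ volume (convexHull ℝ (insert a (σ '' A ∪ B))) := by
  let H : Set V := {z | ⟪n, z⟫ ≤ c}
  have hH : MeasurableSet H := measurableSet_le (by fun_prop) measurable_const
  have hbelow : convexHull ℝ (A ∪ B) ∩ H ⊆ convexHull ℝ (insert b A) ∩ H :=
    Set.subset_inter (convexHull_union_inter_halfSpace_subset ha hb hB hcut)
      Set.inter_subset_right
  have habove : convexHull ℝ (A ∪ B) \ H ⊆ convexHull ℝ (insert a B) \ H := by
    rintro z ⟨hz, hzH⟩
    rw [Set.union_comm] at hz hcut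
    refine ⟨convexHull_union_inter_halfSpace_subset (n := -n) (c := -c) hb ha ?_ ?_ ⟨hz, ?_⟩, hzH⟩
    · simpa using hA
    · simpa [segment_symm ℝ b a] using hcut
    · simpa using (not_le.1 hzH).le
  have hσ : convexHull ℝ (insert b A) ∩ H =
      σ ⁻¹' (convexHull ℝ (insert a (σ '' A)) ∩ H) := by
    have himage : convexHull ℝ (insert a (σ '' A)) = σ '' convexHull ℝ (insert b A) := by
      rw [← hσb, ← Set.image_insert_eq, image_convexHull_linearIsometryEquiv]
    ext z
    simp [himage, H, hσn]
  calc volume (convexHull ℝ (A ∪ B))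
      = volume (convexHull ℝ (A ∪ B) ∩ H) + volume (convexHull ℝ (A ∪ B) \ H) :=
        (measure_inter_add_sdiff _ hH).symm
    _ ≤ volume (convexHull ℝ (insert b A) ∩ H) + volume (convexHull ℝ (insert a B) \ H) := by
        gcongr
    _ = volume (convexHull ℝ (insert a (σ '' A)) ∩ H) + volume (convexHull ℝ (insert a B) \ H) := by
        rw [hσ, volume_preimage_linearIsometryEquiv]
    _ ≤ volume (convexHull ℝ (insert a (σ '' A ∪ B)) ∩ H) +
          volume (convexHull ℝ (insert a (σ '' A ∪ B)) \ H) := by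
        gcongr
        exacts [Set.subset_union_left, Set.subset_union_right]
    _ = volume (convexHull ℝ (insert a (σ '' A ∪ B))) := measure_inter_add_sdiff _ hH

variable [Fact (finrank ℝ V = 2)]

theorem exists_finset_sphere_volume_convexHull_union_le {A B : Finset V} (hAne : A.Nonempty)
    (hBne : B.Nonempty) (hA : ∀ p ∈ A, ‖p‖ = 1) (hB : ∀ q ∈ B, ‖q‖ = 1) {e : V}
    (hsep : ∀ p ∈ A, ∀ q ∈ B, ⟪e, p⟫ < ⟪e, q⟫) {r : ℝ} (hr : ∀ p ∈ A, ∀ q ∈ B, ⟪p, q⟫ ≤ r) :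
    ∃ a ∈ A, ∃ T : Finset V, (T : Set V) ⊆ pointedCap a r ∧ T.card ≤ A.card + B.card ∧
      volume (convexHull ℝ (A ∪ B : Set V)) ≤ volume (convexHull ℝ (T : Set V)) := by
  classical
  obtain ⟨f, hf, hef⟩ := exists_norm_eq_one_inner_eq_zero e
  obtain ⟨c, a, ha, b, hb, hbn, hAn, hBn⟩ := exists_inner_common_tangent hAne hBne f hsep
  have hn : c • e - f ≠ 0 := fun h => by
    have := congrArg (⟪·, f⟫) h
    simp [inner_sub_left, real_inner_smul_left, hef, hf] at this
  have hne : a ≠ b := fun h => (hsep a ha b hb).ne (by rw [h])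
  obtain ⟨σ, hσa, hσb, hσn⟩ := exists_linearIsometryEquiv_swap ((hA a ha).trans (hB b hb).symm)
  have hdisk : convexHull ℝ (A ∪ B : Set V) ⊆ closedBall 0 1 :=
    convexHull_min (Set.union_subset (fun p hp => by simp [hA p hp]) fun q hq => by simp [hB q hq])
      (convex_closedBall 0 1)
  have hvol := volume_convexHull_union_le_of_swap ha hb hAn hBn
    (fun z hz => mem_segment_of_inner_eq hn (hA a ha) (hB b hb) hne
      (mem_closedBall_zero_iff.1 (hdisk hz)) hbn) hσb (hσn _ hbn)
  refine ⟨a, ha, insert a (A.image σ ∪ B), ?_, ?_, by simpa using hvol⟩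
  · suffices ∀ p ∈ insert a (A.image σ ∪ B), p ∈ pointedCap a r from this
    simp only [Finset.forall_mem_insert, Finset.forall_mem_union, Finset.forall_mem_image]
    refine ⟨⟨hA a ha, Or.inl rfl⟩, fun p hp => ?_, fun q hq => ⟨hB q hq, Or.inr (hr a ha q hq)⟩⟩
    rw [← hσb]
    exact map_mem_pointedCap σ ⟨hA p hp, Or.inr (real_inner_comm b p ▸ hr p hp b hb)⟩
  · have hinter : 0 < (A.image σ ∩ B).card :=
      Finset.card_pos.2 ⟨b, Finset.mem_inter.2 ⟨Finset.mem_image.2 ⟨a, ha, hσa⟩, hb⟩⟩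
    have hunion := Finset.card_union_add_card_inter (A.image σ) B
    have himage : (A.image σ).card ≤ A.card := Finset.card_image_le
    have hinsert := Finset.card_insert_le a (A.image σ ∪ B)
    omega

end Reflection

section SphericalReduction

variable {V : Type*} [NormedAddCommGroup V] [InnerProductSpace ℝ V] [Fact (finrank ℝ V = 2)]
  [MeasurableSpace V] [BorelSpace V] [FiniteDimensional ℝ V] {u v : V}

lemma exists_finset_of_subset_sphere_inter_voronoiWedge (hu : ‖u‖ = 1) (hv : ‖v‖ = 1)
    (huv : u ≠ v) {e : V} (he : ‖e‖ = 1) {k : ℝ} (hk : 0 ≤ k) (hk' : k ≤ 1 / 2)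
    (hue : ⟪e, u⟫ = -k) (hve : ⟪e, v⟫ = -k) (S : Finset V)
    (hS : (S : Set V) ⊆ sphere 0 1 ∩ voronoiWedge u v) :
    ∃ a : V, ‖a‖ = 1 ∧ ∃ T : Finset V, (T : Set V) ⊆ pointedCap a (-(1 / 2)) ∧
      T.card ≤ S.card ∧ volume (convexHull ℝ (S : Set V)) ≤ volume (convexHull ℝ (T : Set V)) := by
  classical
  have hnorm : ∀ p ∈ S, ‖p‖ = 1 := fun p hp => mem_sphere_zero_iff_norm.1 (hS hp).1
  have hpair {p q : V} (hp : ‖p‖ = 1) (hpW : p ∈ voronoiWedge u v) (hq : ‖q‖ = 1)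
      (hqW : q ∈ voronoiWedge u v) (hpe : ⟪e, p⟫ ≤ -k) (hqe : -k ≤ ⟪e, q⟫) :
      ⟪p, q⟫ ≤ -(1 / 2) :=
    inner_le_neg_half_of_mem_voronoiWedge hu hv (norm_ne_zero_iff.1 (by simp [he])) huv hue hve
      hp hpW hq hqW hpe hqe
  have hee : ⟪e, e⟫ = 1 := by simp [he]
  have heW : e ∈ voronoiWedge u v := by
    constructor <;> rw [real_inner_comm] <;> linarith
  have heW' : -e ∈ voronoiWedge u v := by
    constructor <;> rw [real_inner_comm, inner_neg_left] <;> linarith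
  obtain hA | hA := (S.filter (⟪e, ·⟫ ≤ -k)).eq_empty_or_nonempty
  · refine ⟨-e, by simpa, S, fun q hq => ⟨hnorm q hq, Or.inr ?_⟩, le_rfl, le_rfl⟩
    have hqe := Finset.filter_eq_empty_iff.1 hA hq
    exact hpair (by simpa) heW' (hnorm q hq) (hS hq).2 (by rw [inner_neg_right]; linarith)
      (not_le.1 hqe).le
  obtain hB | hB := (S.filter (¬⟪e, ·⟫ ≤ -k)).eq_empty_or_nonempty
  · refine ⟨e, he, S, fun p hp => ⟨hnorm p hp, Or.inr ?_⟩, le_rfl, le_rfl⟩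
    have hpe := not_not.1 (Finset.filter_eq_empty_iff.1 hB hp)
    rw [real_inner_comm]
    exact hpair (hnorm p hp) (hS hp).2 he heW hpe (by linarith)
  · have hsep := exists_finset_sphere_volume_convexHull_union_le (r := -(1 / 2)) (e := e) hA hB
      (fun p hp => hnorm p (Finset.mem_filter.1 hp).1)
      (fun q hq => hnorm q (Finset.mem_filter.1 hq).1)
      (fun p hp q hq => (Finset.mem_filter.1 hp).2.trans_lt (not_le.1 (Finset.mem_filter.1 hq).2))
      fun p hp q hq => by
        obtain ⟨hpS, hpe⟩ := Finset.mem_filter.1 hp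
        obtain ⟨hqS, hqe⟩ := Finset.mem_filter.1 hq
        exact hpair (hnorm p hpS) (hS hpS).2 (hnorm q hqS) (hS hqS).2 hpe (not_le.1 hqe).le
    rw [Finset.card_filter_add_card_filter_not, ← Finset.coe_union,
      Finset.filter_union_filter_not_eq] at hsep
    obtain ⟨a, ha, T, hT⟩ := hsep
    exact ⟨a, hnorm a (Finset.mem_filter.1 ha).1, T, hT⟩

theorem exists_finset_sphere_volume_convexHull_le (hu : ‖u‖ = 1) (hv : ‖v‖ = 1)
    (huv : ⟪u, v⟫ ≤ -(1 / 2)) (S : Finset V)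
    (hS : (S : Set V) ⊆ closedBall 0 1 ∩ voronoiWedge u v) :
    ∃ a : V, ‖a‖ = 1 ∧ ∃ T : Finset V, (T : Set V) ⊆ pointedCap a (-(1 / 2)) ∧
      T.card ≤ S.card ∧ volume (convexHull ℝ (S : Set V)) ≤ volume (convexHull ℝ (T : Set V)) := by
  obtain ⟨e, he, k, hk, hk', hue, hve⟩ := exists_norm_eq_one_inner_eq_neg hu hv huv
  have hne : u ≠ v := by
    rintro rfl
    rw [real_inner_self_eq_norm_sq, hu] at huv
    norm_num at huv
  obtain ⟨S', hS', hcard', hvol'⟩ := exists_finset_subset_measure_convexHull_le volume S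
    (hS.trans (closedBall_inter_voronoiWedge_subset_convexHull he hk hk'
      (by rwa [real_inner_comm]) (by rwa [real_inner_comm])))
  obtain ⟨a, ha, T, hT, hcard, hvol⟩ := exists_finset_of_subset_sphere_inter_voronoiWedge
    hu hv hne he hk hk' hue hve S' hS'
  exact ⟨a, ha, T, hT, hcard.trans hcard', hvol'.trans hvol⟩

end SphericalReduction

section VoronoiCell

variable {V : Type*} [NormedAddCommGroup V] [InnerProductSpace ℝ V]

lemma inner_normalize_sub_le_half {c c' p : V} (hpos : 0 < dist c c') (hle : dist c c' ≤ 1)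
    (hp : dist p c ≤ dist p c') : ⟪NormedSpace.normalize (c' - c), p - c⟫ ≤ 1 / 2 := by
  rw [dist_comm, dist_eq_norm] at hpos hle
  have hsq : ‖p - c‖ ^ 2 ≤ ‖(p - c) - (c' - c)‖ ^ 2 := by
    rw [sub_sub_sub_cancel_right, ← dist_eq_norm, ← dist_eq_norm]
    gcongr
  rw [norm_sub_sq_real (p - c), real_inner_comm (c' - c)] at hsq
  rw [NormedSpace.normalize, real_inner_smul_left, inv_mul_le_iff₀ hpos]
  nlinarith

lemma inner_normalize_le_neg_half {x y : V} (h : 2 * π / 3 ≤ InnerProductGeometry.angle x y) :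
    ⟪NormedSpace.normalize x, NormedSpace.normalize y⟫ ≤ -(1 / 2) := by
  calc ⟪NormedSpace.normalize x, NormedSpace.normalize y⟫
      = cos (InnerProductGeometry.angle x y) := by
        rw [InnerProductGeometry.cos_angle, NormedSpace.normalize, NormedSpace.normalize,
          real_inner_smul_left, real_inner_smul_right]
        field_simp
    _ ≤ cos (2 * π / 3) :=
        cos_le_cos_of_nonneg_of_le_pi (by positivity) (InnerProductGeometry.angle_le_pi _ _) h
    _ = -(1 / 2) := by
        rw [show 2 * π / 3 = π - π / 3 by ring, cos_pi_sub, cos_pi_div_three]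

lemma pointedCap_subset_M : pointedCap !₂[0, -1] (-(1 / 2)) ⊆ M := by
  rintro p ⟨hp, rfl | hp1⟩
  · simp [M]
  rw [← pow_left_inj₀ (norm_nonneg p) zero_le_one two_ne_zero, EuclideanSpace.real_norm_sq_eq,
    Fin.sum_univ_two, one_pow] at hp
  replace hp1 : 1 / 2 ≤ p 1 := by
    simp only [PiLp.inner_apply, RCLike.inner_apply, conj_trivial, Fin.sum_univ_two,
      Matrix.cons_val_zero, mul_zero, Matrix.cons_val_one, Matrix.cons_val_fin_one, mul_neg,
      mul_one, zero_add] at hp1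
    linarith
  have habs : |√3 * p 0| ≤ 1 + p 1 := by
    refine abs_le_of_sq_le_sq ?_ (by linarith)
    rw [mul_pow, sq_sqrt zero_le_three]
    nlinarith
  obtain ⟨hneg, hpos⟩ := abs_le.1 habs
  exact ⟨hp.le, by linarith, by linarith⟩

lemma volume_convexHull_le_astar {n : ℕ} {T : Finset Pt} (hT : (T : Set Pt) ⊆ M)
    (hcard : T.card ≤ n) : (volume (convexHull ℝ (T : Set Pt))).toReal ≤ astar n := by
  have hM : M ⊆ closedBall 0 1 := fun p hp => by
    rw [mem_closedBall_zero_iff, ← sq_le_one_iff₀ (norm_nonneg _),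
      EuclideanSpace.real_norm_sq_eq, Fin.sum_univ_two]
    exact hp.1
  refine le_csSup ⟨(volume (closedBall (0 : Pt) 1)).toReal, ?_⟩ ⟨T, hT, hcard, rfl⟩
  rintro _ ⟨S, hS, -, rfl⟩
  exact ENNReal.toReal_mono measure_closedBall_lt_top.ne
    (measure_mono (convexHull_min (hS.trans hM) (convex_closedBall _ _)))

lemma volume_convexHull_le_astar_of_subset_pointedCap {n : ℕ} {a : Pt} (ha : ‖a‖ = 1)
    {T : Finset Pt} (hT : (T : Set Pt) ⊆ pointedCap a (-(1 / 2))) (hcard : T.card ≤ n) :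
    (volume (convexHull ℝ (T : Set Pt))).toReal ≤ astar n := by
  classical
  have hbottom : ‖(!₂[0, -1] : Pt)‖ = 1 := by simp [EuclideanSpace.norm_eq]
  obtain ⟨σ, hσa, -⟩ := exists_linearIsometryEquiv_swap (ha.trans hbottom.symm)
  have himage : (T.image σ : Set Pt) ⊆ M := by
    rw [Finset.coe_image, Set.image_subset_iff]
    exact fun p hp => pointedCap_subset_M (hσa ▸ map_mem_pointedCap σ (hT hp))
  rw [← volume_convexHull_image_linearIsometryEquiv σ, ← Finset.coe_image]
  exact volume_convexHull_le_astar himage (Finset.card_image_le.trans hcard)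

end VoronoiCell

/-- A Voronoi cell of a disk whose center is at positive distance at most 1 from the centers of
two neighboring disks forming an angle of at least `2π/3` has area at most `a*(n)`, where `n`
bounds the number of its vertices. -/
theorem voronoi_cell_area_le_astar (C C' C'' : Pt)
    (h1 : 0 < dist C C') (h1' : dist C C' ≤ 1)
    (h2 : 0 < dist C C'') (h2' : dist C C'' ≤ 1)
    (hangle : 2 * π / 3 ≤ EuclideanGeometry.angle C' C C'')
    (n : ℕ) (hn : 3 ≤ n) (S : Finset Pt) (hcard : S.card ≤ n)
    (P : Set Pt) (hP : P = convexHull ℝ (S : Set Pt))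
    (hPball : P ⊆ closedBall C 1)
    (hPvor : ∀ p ∈ P, dist p C ≤ dist p C' ∧ dist p C ≤ dist p C'') :
    (volume P).toReal ≤ astar n := by
  classical
  subst hP
  have hne : C' - C ≠ 0 := sub_ne_zero.2 (dist_pos.1 h1).symm
  have hne' : C'' - C ≠ 0 := sub_ne_zero.2 (dist_pos.1 h2).symm
  have hS : ((-C +ᵥ S : Finset Pt) : Set Pt) ⊆ closedBall 0 1 ∩
      voronoiWedge (NormedSpace.normalize (C' - C)) (NormedSpace.normalize (C'' - C)) := by
    intro _ hx
    obtain ⟨p, hp, rfl⟩ := Finset.mem_vadd_finset.1 hx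
    have hpP := subset_convexHull ℝ _ hp
    obtain ⟨hp', hp''⟩ := hPvor p hpP
    rw [vadd_eq_add, neg_add_eq_sub]
    exact ⟨by simpa [dist_eq_norm] using hPball hpP, inner_normalize_sub_le_half h1 h1' hp',
      inner_normalize_sub_le_half h2 h2' hp''⟩
  obtain ⟨a, ha, T, hT, hTcard, hvol⟩ := exists_finset_sphere_volume_convexHull_le
    (NormedSpace.norm_normalize_eq_one_iff.2 hne) (NormedSpace.norm_normalize_eq_one_iff.2 hne')
    (inner_normalize_le_neg_half hangle) _ hS
  rw [Finset.coe_vadd_finset, convexHull_vadd, measure_vadd] at hvol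
  rw [Finset.card_vadd_finset] at hTcard
  exact (ENNReal.toReal_mono (T.finite_toSet.isCompact_convexHull ℝ).measure_lt_top.ne hvol).trans
    (volume_convexHull_le_astar_of_subset_pointedCap ha hT (hTcard.trans hcard))
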